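/- For all 𝒵-measurable integrable real random variables M₁ and M₀ such that the displayed signal is integrable, E[M₁ − M₀ + (D/S)·(Y° − M₁) − ((1−D)/(1−S))·(Y° − M₀) | 𝒵] = E[Y¹ − Y⁰ | 𝒵] a.s.; that is, the Robins–Rotnitzky-type doubly robust signal is an unbiased signal for the conditional average treatment effect for any 𝒵-measurable regression-function plug-ins M₁, M₀. -/

import Mathlib

open MeasureTheory Filter
open scoped ENNReal

/-!
Put `M̄ = (1 - S) M₁ + S M₀`. Multiplying the doubly robust signal by the conditional variance
`S (1 - S)` of the treatment collapses it to `(D - S) (Y° - M̄)`. The residual `D - S` has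
conditional mean zero, so `(D - S) M̄` contributes nothing whatever the plug-ins are, and by
unconfoundedness `(D - S) Y° = (1 - S) D Y¹ - S (1 - D) Y⁰` has conditional mean
`S (1 - S) E[Y¹ - Y⁰ | 𝒵]`. Under overlap the factor `S (1 - S)` cancels; as it is bounded,
`(D - S) M̄` inherits integrability from the signal.
-/

section Signal

variable {Ω E : Type*} [AddCommGroup E] [Module ℝ E]

/-- The observed outcome `Y° = D Y¹ + (1 - D) Y⁰` under the treatment indicator `D`, for potential
outcomes in a real vector space. -/
def observedOutcome (D : Ω → ℝ) (Y1 Y0 : Ω → E) : Ω → E :=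
  fun ω => D ω • Y1 ω + (1 - D ω) • Y0 ω

/-- The Robins–Rotnitzky doubly robust signal for the conditional average treatment effect, built
from the treatment indicator `D`, the propensity score `S`, the outcome `Y` and the regression
plug-ins `M1`, `M0`. An inverse weight whose denominator `S ω` or `1 - S ω` vanishes is `0`. -/
noncomputable def drSignal (D S : Ω → ℝ) (Y M1 M0 : Ω → E) : Ω → E :=
  fun ω => M1 ω - M0 ω + (D ω / S ω) • (Y ω - M1 ω) - ((1 - D ω) / (1 - S ω)) • (Y ω - M0 ω)

theorem residual_smul_observedOutcome {D : Ω → ℝ} (hD : ∀ ω, D ω = 0 ∨ D ω = 1)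
    (S : Ω → ℝ) (Y1 Y0 : Ω → E) :
    (D - S) • observedOutcome D Y1 Y0 = (1 - S) • (D • Y1) - S • ((1 - D) • Y0) := by
  ext ω
  rcases hD ω with h | h <;> simp [observedOutcome, h]

theorem variance_smul_drSignal_apply {S : Ω → ℝ} {ω : Ω} (h0 : S ω ≠ 0) (h1 : S ω ≠ 1)
    (D : Ω → ℝ) (Y M1 M0 : Ω → E) :
    (S ω * (1 - S ω)) • drSignal D S Y M1 M0 ω =
      (D ω - S ω) • Y ω - (D ω - S ω) • ((1 - S ω) • M1 ω + S ω • M0 ω) := by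
  have h1' : 1 - S ω ≠ 0 := sub_ne_zero.mpr h1.symm
  simp only [drSignal]
  match_scalars <;> field_simp <;> ring

end Signal

section CondExp

variable {Ω E : Type*} [NormedAddCommGroup E] [NormedSpace ℝ E]
  {m m0 : MeasurableSpace Ω} {μ : Measure Ω}

theorem integrable_of_condExp_ne_zero {f : Ω → E} (h : ∀ᵐ ω ∂μ, (μ[f | m]) ω ≠ 0) :
    Integrable f μ := by
  by_contra hf
  have hμ : μ = 0 := by simpa [condExp_of_not_integrable hf] using h
  exact hf (hμ ▸ integrable_zero_measure)

theorem integrable_smul_of_mem_Icc {a : Ω → ℝ} {g : Ω → E} (hg : Integrable g μ)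
    (ha : AEStronglyMeasurable a μ) (ha01 : ∀ᵐ ω ∂μ, a ω ∈ Set.Icc 0 1) :
    Integrable (a • g) μ :=
  hg.bdd_smul 1 ha <| ha01.mono fun ω h => by simpa [abs_of_nonneg h.1] using h.2

variable [CompleteSpace E]

theorem condExp_ae_eq_of_condExp_smul {w : Ω → ℝ} {f g : Ω → E}
    (hw : AEStronglyMeasurable[m] w μ) (hw0 : ∀ᵐ ω ∂μ, w ω ≠ 0) (hf : Integrable f μ)
    (hwf : Integrable (w • f) μ) (h : μ[w • f | m] =ᵐ[μ] w • g) :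
    μ[f | m] =ᵐ[μ] g := by
  filter_upwards [condExp_smul_of_aestronglyMeasurable_left hw hwf hf, hw0, h] with ω hpull hω hwg
  exact smul_right_injective E hω (hpull.symm.trans hwg)

theorem condExp_residual_smul (hm : m ≤ m0) [SigmaFinite (μ.trim hm)] {f s : Ω → ℝ} {g : Ω → E}
    (hf : Integrable f μ) (hs : s =ᵐ[μ] μ[f | m]) (hg : AEStronglyMeasurable[m] g μ)
    (hfg : Integrable ((f - s) • g) μ) :
    μ[(f - s) • g | m] =ᵐ[μ] 0 := by
  have hs_int : Integrable s μ := integrable_condExp.congr hs.symm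
  have hs_meas : AEStronglyMeasurable[m] s μ := ⟨_, stronglyMeasurable_condExp, hs⟩
  filter_upwards [condExp_smul_of_aestronglyMeasurable_right (hf.sub hs_int) hfg hg,
    condExp_sub hf hs_int m, condExp_of_aestronglyMeasurable' hm hs_meas hs_int, hs]
    with ω hpull hsub hself hω
  simp [hpull, hsub, hself, hω]

theorem condExp_residual_smul_sub (hm : m ≤ m0) [SigmaFinite (μ.trim hm)] {f s : Ω → ℝ}
    {Y g : Ω → E} (hf : Integrable f μ) (hs : s =ᵐ[μ] μ[f | m])
    (hg : AEStronglyMeasurable[m] g μ) (hY : Integrable ((f - s) • Y) μ)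
    (hYg : Integrable ((f - s) • Y - (f - s) • g) μ) :
    μ[(f - s) • Y - (f - s) • g | m] =ᵐ[μ] μ[(f - s) • Y | m] := by
  have hfg : Integrable ((f - s) • g) μ := by simpa using hY.sub hYg
  simpa using (condExp_sub hY hfg m).trans
    (EventuallyEq.rfl.sub (condExp_residual_smul hm hf hs hg hfg))

end CondExp

section Treatment

variable {Ω E : Type*} [NormedAddCommGroup E] [NormedSpace ℝ E]
  {𝒵 m0 : MeasurableSpace Ω} {μ : Measure Ω} {D S : Ω → ℝ} {Y1 Y0 : Ω → E}

theorem integrable_residual_smul_observedOutcome (hD01 : ∀ ω, D ω = 0 ∨ D ω = 1)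
    (hS : AEStronglyMeasurable S μ) (hS01 : ∀ᵐ ω ∂μ, S ω ∈ Set.Icc 0 1)
    (hDY1 : Integrable (D • Y1) μ) (hDY0 : Integrable ((1 - D) • Y0) μ) :
    Integrable ((D - S) • observedOutcome D Y1 Y0) μ := by
  have hS01' : ∀ᵐ ω ∂μ, (1 - S) ω ∈ Set.Icc 0 1 :=
    hS01.mono fun _ => Set.Icc.one_sub_mem
  rw [residual_smul_observedOutcome hD01]
  exact (integrable_smul_of_mem_Icc hDY1 (aestronglyMeasurable_const.sub hS) hS01').sub
    (integrable_smul_of_mem_Icc hDY0 hS hS01)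

variable [CompleteSpace E]

theorem condExp_residual_smul_observedOutcome (h𝒵 : 𝒵 ≤ m0) (hD01 : ∀ ω, D ω = 0 ∨ D ω = 1)
    (hS : AEStronglyMeasurable[𝒵] S μ) (hS01 : ∀ᵐ ω ∂μ, S ω ∈ Set.Icc 0 1)
    (hDY1 : Integrable (D • Y1) μ) (hDY0 : Integrable ((1 - D) • Y0) μ)
    (hfact1 : μ[D • Y1 | 𝒵] =ᵐ[μ] S • μ[Y1 | 𝒵])
    (hfact0 : μ[(1 - D) • Y0 | 𝒵] =ᵐ[μ] (1 - S) • μ[Y0 | 𝒵]) :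
    μ[(D - S) • observedOutcome D Y1 Y0 | 𝒵] =ᵐ[μ]
      (S * (1 - S)) • (μ[Y1 | 𝒵] - μ[Y0 | 𝒵]) := by
  have hS' : AEStronglyMeasurable[𝒵] (1 - S) μ := aestronglyMeasurable_const.sub hS
  have hS01' : ∀ᵐ ω ∂μ, (1 - S) ω ∈ Set.Icc 0 1 :=
    hS01.mono fun _ => Set.Icc.one_sub_mem
  have hint1 := integrable_smul_of_mem_Icc hDY1 (hS'.mono h𝒵) hS01'
  have hint0 := integrable_smul_of_mem_Icc hDY0 (hS.mono h𝒵) hS01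
  rw [residual_smul_observedOutcome hD01]
  filter_upwards [condExp_sub hint1 hint0 𝒵, hfact1, hfact0,
    condExp_smul_of_aestronglyMeasurable_left hS' hint1 hDY1,
    condExp_smul_of_aestronglyMeasurable_left hS hint0 hDY0] with ω hsub h1 h0 hpull1 hpull0
  simp only [Pi.sub_apply, Pi.smul_apply', Pi.mul_apply, Pi.one_apply] at *
  rw [hsub, hpull1, hpull0, h1, h0]
  module

variable {M1 M0 : Ω → E}

theorem condExp_variance_smul_drSignal (h𝒵 : 𝒵 ≤ m0) [SigmaFinite (μ.trim h𝒵)]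
    (hD01 : ∀ ω, D ω = 0 ∨ D ω = 1) (hD : Integrable D μ) (hS : S =ᵐ[μ] μ[D | 𝒵])
    (hS01 : ∀ᵐ ω ∂μ, S ω ∈ Set.Ioo 0 1)
    (hDY1 : Integrable (D • Y1) μ) (hDY0 : Integrable ((1 - D) • Y0) μ)
    (hfact1 : μ[D • Y1 | 𝒵] =ᵐ[μ] S • μ[Y1 | 𝒵])
    (hfact0 : μ[(1 - D) • Y0 | 𝒵] =ᵐ[μ] (1 - S) • μ[Y0 | 𝒵])
    (hM1 : AEStronglyMeasurable[𝒵] M1 μ) (hM0 : AEStronglyMeasurable[𝒵] M0 μ)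
    (hint : Integrable ((S * (1 - S)) • drSignal D S (observedOutcome D Y1 Y0) M1 M0) μ) :
    μ[(S * (1 - S)) • drSignal D S (observedOutcome D Y1 Y0) M1 M0 | 𝒵] =ᵐ[μ]
      (S * (1 - S)) • (μ[Y1 | 𝒵] - μ[Y0 | 𝒵]) := by
  have hS_meas : AEStronglyMeasurable[𝒵] S μ := ⟨_, stronglyMeasurable_condExp, hS⟩
  have hM_meas : AEStronglyMeasurable[𝒵] ((1 - S) • M1 + S • M0) μ :=
    ((aestronglyMeasurable_const.sub hS_meas).smul hM1).add (hS_meas.smul hM0)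
  have hS_Icc : ∀ᵐ ω ∂μ, S ω ∈ Set.Icc 0 1 := hS01.mono fun _ => Set.mem_Icc_of_Ioo
  have hsplit : (S * (1 - S)) • drSignal D S (observedOutcome D Y1 Y0) M1 M0 =ᵐ[μ]
      (D - S) • observedOutcome D Y1 Y0 - (D - S) • ((1 - S) • M1 + S • M0) :=
    hS01.mono fun ω h => variance_smul_drSignal_apply h.1.ne' h.2.ne D _ M1 M0
  calc μ[(S * (1 - S)) • drSignal D S (observedOutcome D Y1 Y0) M1 M0 | 𝒵]
    _ =ᵐ[μ] μ[(D - S) • observedOutcome D Y1 Y0 - (D - S) • ((1 - S) • M1 + S • M0) | 𝒵] :=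
      condExp_congr_ae hsplit
    _ =ᵐ[μ] μ[(D - S) • observedOutcome D Y1 Y0 | 𝒵] :=
      condExp_residual_smul_sub h𝒵 hD hS hM_meas
        (integrable_residual_smul_observedOutcome hD01 (hS_meas.mono h𝒵) hS_Icc hDY1 hDY0)
        (hint.congr hsplit)
    _ =ᵐ[μ] (S * (1 - S)) • (μ[Y1 | 𝒵] - μ[Y0 | 𝒵]) :=
      condExp_residual_smul_observedOutcome h𝒵 hD01 hS_meas hS_Icc hDY1 hDY0 hfact1 hfact0

theorem dr_signal_unbiased_cate_general (h𝒵 : 𝒵 ≤ m0) [SigmaFinite (μ.trim h𝒵)]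
    (hD01 : ∀ ω, D ω = 0 ∨ D ω = 1) (hS : S =ᵐ[μ] μ[D | 𝒵])
    (hS01 : ∀ᵐ ω ∂μ, S ω ∈ Set.Ioo 0 1)
    (hfact1 : μ[D • Y1 | 𝒵] =ᵐ[μ] S • μ[Y1 | 𝒵])
    (hfact0 : μ[(1 - D) • Y0 | 𝒵] =ᵐ[μ] (1 - S) • μ[Y0 | 𝒵])
    (hY1 : Integrable Y1 μ) (hY0 : Integrable Y0 μ)
    (hM1 : AEStronglyMeasurable[𝒵] M1 μ) (hM0 : AEStronglyMeasurable[𝒵] M0 μ)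
    (hint : Integrable (drSignal D S (observedOutcome D Y1 Y0) M1 M0) μ) :
    μ[drSignal D S (observedOutcome D Y1 Y0) M1 M0 | 𝒵] =ᵐ[μ] μ[Y1 - Y0 | 𝒵] := by
  have hD : Integrable D μ := integrable_of_condExp_ne_zero <| by
    filter_upwards [hS, hS01] with ω h hω using h ▸ hω.1.ne'
  have hD_Icc : ∀ᵐ ω ∂μ, D ω ∈ Set.Icc 0 1 :=
    ae_of_all _ fun ω => by rcases hD01 ω with h | h <;> simp [h]
  have hDY1 : Integrable (D • Y1) μ := integrable_smul_of_mem_Icc hY1 hD.aestronglyMeasurable hD_Icc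
  have hDY0 : Integrable ((1 - D) • Y0) μ :=
    integrable_smul_of_mem_Icc hY0 (aestronglyMeasurable_const.sub hD.aestronglyMeasurable)
      (hD_Icc.mono fun _ => Set.Icc.one_sub_mem)
  have hS_meas : AEStronglyMeasurable[𝒵] S μ := ⟨_, stronglyMeasurable_condExp, hS⟩
  have hvar_meas : AEStronglyMeasurable[𝒵] (S * (1 - S)) μ :=
    hS_meas.mul (aestronglyMeasurable_const.sub hS_meas)
  have hvar_Ioc : ∀ᵐ ω ∂μ, (S * (1 - S)) ω ∈ Set.Ioc 0 1 := hS01.mono fun ω h =>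
    ⟨mul_pos h.1 (sub_pos.mpr h.2), mul_le_one₀ h.2.le (sub_pos.mpr h.2).le (sub_le_self 1 h.1.le)⟩
  have hvar_int := integrable_smul_of_mem_Icc hint (hvar_meas.mono h𝒵)
    (hvar_Ioc.mono fun _ => Set.mem_Icc_of_Ioc)
  refine condExp_ae_eq_of_condExp_smul hvar_meas (hvar_Ioc.mono fun _ h => h.1.ne') hint hvar_int ?_
  exact (condExp_variance_smul_drSignal h𝒵 hD01 hD hS hS01 hDY1 hDY0 hfact1 hfact0 hM1 hM0
    hvar_int).trans (EventuallyEq.rfl.smul (condExp_sub hY1 hY0 𝒵).symm)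

end Treatment

/-- **Unbiasedness of the Robins–Rotnitzky doubly robust signal for the conditional
average treatment effect.** For all 𝒵-measurable integrable plug-ins `M₁`, `M₀` such
that the doubly robust signal is integrable,
`E[M₁ − M₀ + (D/S)(Y° − M₁) − ((1−D)/(1−S))(Y° − M₀) | 𝒵] = E[Y¹ − Y⁰ | 𝒵]` a.s. -/
theorem dr_signal_unbiased_cate
    {Ω : Type*} {m0 : MeasurableSpace Ω} {μ : Measure Ω} [IsProbabilityMeasure μ]
    (𝒵 : MeasurableSpace Ω) (h𝒵 : 𝒵 ≤ m0)
    (D Y1 Y0 S : Ω → ℝ) (sbar : ℝ) (hsbar0 : 0 < sbar) (hsbar1 : sbar < 1 / 2)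
    (hD01 : ∀ ω, D ω = 0 ∨ D ω = 1)
    (Yo : Ω → ℝ) (hYo : Yo = fun ω => D ω * Y1 ω + (1 - D ω) * Y0 ω)
    (hSmeas : Measurable[𝒵] S)
    (hS : S =ᵐ[μ] μ[D | 𝒵])
    (hSbound : ∀ᵐ ω ∂μ, sbar ≤ S ω ∧ S ω ≤ 1 - sbar)
    (hfact1 : μ[fun ω => D ω * Y1 ω | 𝒵] =ᵐ[μ] fun ω => S ω * (μ[Y1 | 𝒵]) ω)
    (hfact0 : μ[fun ω => (1 - D ω) * Y0 ω | 𝒵] =ᵐ[μ] fun ω => (1 - S ω) * (μ[Y0 | 𝒵]) ω)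
    (hY1int : Integrable Y1 μ) (hY0int : Integrable Y0 μ) :
    ∀ M1 M0 : Ω → ℝ, Measurable[𝒵] M1 → Measurable[𝒵] M0 →
      Integrable M1 μ → Integrable M0 μ →
      Integrable (fun ω => M1 ω - M0 ω + D ω / S ω * (Yo ω - M1 ω)
        - (1 - D ω) / (1 - S ω) * (Yo ω - M0 ω)) μ →
      μ[fun ω => M1 ω - M0 ω + D ω / S ω * (Yo ω - M1 ω)
          - (1 - D ω) / (1 - S ω) * (Yo ω - M0 ω) | 𝒵] =ᵐ[μ]
        μ[fun ω => Y1 ω - Y0 ω | 𝒵] := by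
  subst hYo
  have hS01 : ∀ᵐ ω ∂μ, S ω ∈ Set.Ioo 0 1 :=
    hSbound.mono fun ω h => ⟨by linarith [h.1], by linarith [h.2]⟩
  exact fun M1 M0 hM1 hM0 _ _ => dr_signal_unbiased_cate_general h𝒵 hD01 hS hS01 hfact1 hfact0
    hY1int hY0int hM1.aestronglyMeasurable hM0.aestronglyMeasurable
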